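/- Let d >= 4, let (b_1,...,b_d) be a uniformly random orthonormal basis of R^d (Haar-distributed under the orthogonal group), and let phi be a real-valued square-integrable function on the unit sphere with respect to the uniform probability measure u. Then |Cov(phi(b_1), phi(b_2))| <= Var_u(phi)/(d-1). -/

import Mathlib

open MeasureTheory

/-!
Let `T f` be the conditional expectation of `f (b₁)` given `b₂`, so that the covariance of `φ (b₁)`
and `φ (b₂)` is `⟪T φ, φ⟫` for centred `φ`, and `T` is symmetric because the pair is exchangeable.
Given `b₂`, the vector `b₁` is uniform on the unit sphere of `b₂ᗮ`, whence
`T ⟪·, a⟫ ^ k = c k * (‖a‖ ^ 2 - ⟪·, a⟫ ^ 2) ^ (k / 2)`, where `c k` is the `k`-th moment of a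
coordinate on the sphere of a `(d - 1)`-dimensional space. Hence `T` acts on the polynomials of
degree at most `k`, modulo those of smaller degree, as the scalar `± c k`. As `T` is symmetric and
the polynomials are dense, its quadratic form on the functions orthogonal to the constants is
bounded by `sup_{k ≥ 1} |c k| = c 2 = 1 / (d - 1)`.
-/

open ProbabilityTheory
open scoped InnerProductSpace Polynomial

section Filtration

variable {H : Type*} [NormedAddCommGroup H] [InnerProductSpace ℝ H]

lemma map_mem_of_map_sub_smul_mem {R M : Type*} [Ring R] [AddCommGroup M] [Module R M]
    {T : M →ₗ[R] M} {V : ℕ → Submodule R M} {c : ℕ → R} (hV : Monotone V) (hV₀ : V 0 = ⊥)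
    (hTV : ∀ k, ∀ x ∈ V (k + 1), T x - c k • x ∈ V k) (k : ℕ) {x : M} (hx : x ∈ V k) :
    T x ∈ V k := by
  cases k with
  | zero =>
    obtain rfl : x = 0 := by simpa [hV₀] using hx
    simp
  | succ k =>
    simpa using add_mem (hV k.le_succ (hTV k x hx)) ((V (k + 1)).smul_mem (c k) hx)

lemma inner_map_self_eq_add_starProjection {T : H →ₗ[ℝ] H} (hT : T.IsSymmetric)
    {U : Submodule ℝ H} [U.HasOrthogonalProjection] (hTU : ∀ y ∈ U, T y ∈ U) {c : ℝ} {x : H}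
    (hx : T x - c • x ∈ U) :
    ⟪T x, x⟫_ℝ = ⟪T (U.starProjection x), U.starProjection x⟫_ℝ
      + c * (‖x‖ ^ 2 - ‖U.starProjection x‖ ^ 2) := by
  set y := U.starProjection x
  obtain ⟨z, hxz⟩ : ∃ z, x = y + z := ⟨x - y, by abel⟩
  have hy : y ∈ U := U.starProjection_apply_mem x
  have hz : ∀ u ∈ U, ⟪u, z⟫_ℝ = 0 := fun u hu ↦ by
    rw [eq_sub_of_add_eq' hxz.symm]
    exact Submodule.inner_right_of_mem_orthogonal hu (U.sub_starProjection_mem_orthogonal x)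
  have hTyz : ⟪T y, z⟫_ℝ = 0 := hz _ (hTU y hy)
  have hTzy : ⟪T z, y⟫_ℝ = 0 := by rw [hT, real_inner_comm, hTyz]
  have hTz : T z - c • z ∈ U := by
    have : T z - c • z = (T x - c • x) - (T y - c • y) := by rw [hxz, map_add, smul_add]; abel
    exact this ▸ sub_mem hx (sub_mem (hTU y hy) (U.smul_mem c hy))
  have hTzz : ⟪T z, z⟫_ℝ = c * ‖z‖ ^ 2 := by
    have := hz _ hTz
    rwa [inner_sub_left, real_inner_smul_left, real_inner_self_eq_norm_sq, sub_eq_zero] at this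
  have hnorm : ‖x‖ ^ 2 = ‖y‖ ^ 2 + ‖z‖ ^ 2 := by rw [hxz, norm_add_sq_real, hz y hy]; ring
  rw [hnorm, hxz, map_add, inner_add_left, inner_add_right, inner_add_right, hTyz, hTzy, hTzz]
  ring

variable {T : H →L[ℝ] H} {V : ℕ → Submodule ℝ H} {c : ℕ → ℝ} {C : ℝ} {m : ℕ}

lemma abs_inner_map_self_le_of_mem (hT : (T : H →ₗ[ℝ] H).IsSymmetric)
    [∀ k, (V k).HasOrthogonalProjection] (hV : Monotone V) (hV₀ : V 0 = ⊥)
    (hTV : ∀ k, ∀ x ∈ V (k + 1), T x - c k • x ∈ V k) (hc : ∀ k, m ≤ k → |c k| ≤ C)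
    {k : ℕ} (hk : m ≤ k) {x : H} (hxk : x ∈ V k) (hxm : x ∈ (V m)ᗮ) :
    |⟪T x, x⟫_ℝ| ≤ C * ‖x‖ ^ 2 := by
  induction k, hk using Nat.le_induction generalizing x with
  | base =>
    have hx : x ∈ V m ⊓ (V m)ᗮ := ⟨hxk, hxm⟩
    obtain rfl : x = 0 := by simpa [Submodule.inf_orthogonal_eq_bot] using hx
    simp
  | succ k hk ih =>
    set y := (V k).starProjection x
    have hym : y ∈ (V m)ᗮ := by
      have : x - y ∈ (V m)ᗮ :=
        Submodule.orthogonal_le (hV hk) ((V k).sub_starProjection_mem_orthogonal x)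
      simpa using sub_mem hxm this
    have hle : ‖y‖ ^ 2 ≤ ‖x‖ ^ 2 := by
      gcongr
      exact (V k).norm_starProjection_apply_le x
    have hstep : ⟪T x, x⟫_ℝ = ⟪T y, y⟫_ℝ + c k * (‖x‖ ^ 2 - ‖y‖ ^ 2) :=
      inner_map_self_eq_add_starProjection hT
        (fun _ ↦ map_mem_of_map_sub_smul_mem (T := (T : H →ₗ[ℝ] H)) hV hV₀ hTV k) (hTV k x hxk)
    calc |⟪T x, x⟫_ℝ| ≤ |⟪T y, y⟫_ℝ| + |c k| * (‖x‖ ^ 2 - ‖y‖ ^ 2) := by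
          rw [hstep, ← abs_of_nonneg (sub_nonneg.2 hle), ← abs_mul,
            abs_of_nonneg (sub_nonneg.2 hle)]
          exact abs_add_le _ _
      _ ≤ C * ‖y‖ ^ 2 + C * (‖x‖ ^ 2 - ‖y‖ ^ 2) := by
          have := sub_nonneg.2 hle
          gcongr
          · exact ih ((V k).starProjection_apply_mem x) hym
          · exact hc k hk
      _ = C * ‖x‖ ^ 2 := by ring

lemma abs_inner_map_self_le_of_hasOrthogonalProjection (hT : (T : H →ₗ[ℝ] H).IsSymmetric)
    [∀ k, (V k).HasOrthogonalProjection] (hV : Monotone V) (hV₀ : V 0 = ⊥)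
    (hdense : (⨆ k, V k).topologicalClosure = ⊤)
    (hTV : ∀ k, ∀ x ∈ V (k + 1), T x - c k • x ∈ V k) (hc : ∀ k, m ≤ k → |c k| ≤ C)
    {f : H} (hf : f ∈ (V m)ᗮ) :
    |⟪T f, f⟫_ℝ| ≤ C * ‖f‖ ^ 2 := by
  have hlim := Submodule.starProjection_tendsto_self V hV f hdense.ge
  refine le_of_tendsto_of_tendsto (((T.continuous.tendsto f).comp hlim).inner hlim).abs
    ((hlim.norm.pow 2).const_mul C) (Filter.eventually_atTop.2 ⟨m, fun k hk ↦ ?_⟩)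
  refine abs_inner_map_self_le_of_mem hT hV hV₀ hTV hc hk ((V k).starProjection_apply_mem f) ?_
  have : f - (V k).starProjection f ∈ (V m)ᗮ :=
    Submodule.orthogonal_le (hV hk) ((V k).sub_starProjection_mem_orthogonal f)
  simpa using sub_mem hf this

theorem abs_inner_map_self_le_of_filtration [CompleteSpace H]
    (hT : (T : H →ₗ[ℝ] H).IsSymmetric) (hV : Monotone V) (hV₀ : V 0 = ⊥)
    (hdense : (⨆ k, V k).topologicalClosure = ⊤)
    (hTV : ∀ k, ∀ x ∈ V (k + 1), T x - c k • x ∈ V k) (hc : ∀ k, m ≤ k → |c k| ≤ C)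
    {f : H} (hf : f ∈ (V m)ᗮ) :
    |⟪T f, f⟫_ℝ| ≤ C * ‖f‖ ^ 2 := by
  refine abs_inner_map_self_le_of_hasOrthogonalProjection (V := fun k ↦ (V k).topologicalClosure)
    (m := m) hT (fun _ _ h ↦ Submodule.topologicalClosure_mono (hV h)) ?_ ?_ ?_ hc ?_
  · simp [hV₀]
  · refine top_le_iff.1 (hdense.ge.trans (Submodule.topologicalClosure_mono ?_))
    exact iSup_mono fun k ↦ (V k).le_topologicalClosure
  · intro k x hx
    have hcont : Continuous fun x ↦ T x - c k • x := by fun_prop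
    exact map_mem_closure (s := V (k + 1)) (f := fun x ↦ T x - c k • x) hcont hx (hTV k)
  · rwa [Submodule.orthogonal_closure]

end Filtration

section Moments

variable {E : Type*} [NormedAddCommGroup E] [InnerProductSpace ℝ E] [MeasurableSpace E]
  [BorelSpace E] {μ : Measure E} {f : E → ℝ}

lemma ae_eq_zero_of_integral_exp_inner_eq_zero [SecondCountableTopology E] [CompleteSpace E]
    (hf : Integrable f μ)
    (h : ∀ a : E, ∫ x, Complex.exp (⟪x, a⟫_ℝ * Complex.I) * f x ∂μ = 0) : f =ᵐ[μ] 0 := by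
  let p : E → ENNReal := fun x ↦ ENNReal.ofReal (f x)
  let n : E → ENNReal := fun x ↦ ENNReal.ofReal (-f x)
  have hp : AEMeasurable p μ := hf.aemeasurable.ennreal_ofReal
  have hn : AEMeasurable n μ := hf.aemeasurable.neg.ennreal_ofReal
  have hfin : ∀ g : E → ℝ, Integrable g μ → ∫⁻ x, ENNReal.ofReal (g x) ∂μ ≠ ⊤ :=
    fun g hg ↦ hg.lintegral_lt_top.ne
  have : IsFiniteMeasure (μ.withDensity p) := isFiniteMeasure_withDensity (hfin f hf)
  have : IsFiniteMeasure (μ.withDensity n) := isFiniteMeasure_withDensity (hfin (-f) hf.neg)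
  have hchar (g : E → ℝ) (hg : Integrable g μ) (a : E) :
      charFun (μ.withDensity fun x ↦ ENNReal.ofReal (g x)) a
        = ∫ x, ((g x)⁺ : ℝ) • Complex.exp (⟪x, a⟫_ℝ * Complex.I) ∂μ := by
    rw [charFun_apply, integral_withDensity_eq_integral_toReal_smul₀
      hg.aemeasurable.ennreal_ofReal (by simp)]
    simp [ENNReal.toReal_ofReal', posPart_def]
  have hint (g : E → ℝ) (hg : Integrable g μ) (a : E) :
      Integrable (fun x ↦ ((g x)⁺ : ℝ) • Complex.exp (⟪x, a⟫_ℝ * Complex.I)) μ :=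
    hg.pos_part.smul_bdd 1 (by fun_prop) (by simp [Complex.norm_exp_ofReal_mul_I])
  have heq : μ.withDensity p = μ.withDensity n := by
    refine Measure.ext_of_charFun (funext fun a ↦ ?_)
    refine (hchar f hf a).trans (Eq.trans ?_ (hchar (-f) hf.neg a).symm)
    rw [← sub_eq_zero, ← integral_sub (hint f hf a) (hint (-f) hf.neg a), ← h a]
    congr with x
    rw [← sub_smul, Pi.neg_apply, posPart_neg]
    simp [posPart_sub_negPart, mul_comm]
  filter_upwards [(withDensity_eq_iff hp hn (hfin f hf)).1 heq] with x hx
  rcases le_total (f x) 0 with h0 | h0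
  · simpa [p, n, ENNReal.ofReal_of_nonpos h0, eq_comm, h0.ge_iff_eq'] using hx
  · simpa [p, n, ENNReal.ofReal_of_nonpos (neg_nonpos.2 h0), h0.ge_iff_eq'] using hx

lemma integral_exp_inner_eq_zero_of_forall_integral_pow_inner_eq_zero {R : ℝ}
    (hμ : ∀ᵐ x ∂μ, ‖x‖ ≤ R) (hf : Integrable f μ) {a : E}
    (h : ∀ k : ℕ, ∫ x, ⟪x, a⟫_ℝ ^ k * f x ∂μ = 0) :
    ∫ x, Complex.exp (⟪x, a⟫_ℝ * Complex.I) * f x ∂μ = 0 := by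
  let term : ℕ → E → ℂ := fun k x ↦ (⟪x, a⟫_ℝ * Complex.I) ^ k / k.factorial * f x
  have hterm (k : ℕ) : ∫ x, term k x ∂μ = 0 := by
    have : ∀ x, term k x = Complex.I ^ k / k.factorial * ((⟪x, a⟫_ℝ ^ k * f x : ℝ) : ℂ) := by
      intro x
      simp only [term]
      push_cast
      ring
    simp_rw [this]
    rw [integral_const_mul, integral_complex_ofReal, h]
    simp
  have hsum : HasSum (fun k ↦ ∫ x, term k x ∂μ)
      (∫ x, Complex.exp (⟪x, a⟫_ℝ * Complex.I) * f x ∂μ) := by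
    refine hasSum_integral_of_dominated_convergence
      (fun k x ↦ (R * ‖a‖) ^ k / k.factorial * |f x|) (fun k ↦ ?_) (fun k ↦ ?_) ?_ ?_ ?_
    · exact (by fun_prop : Continuous fun x : E ↦
        (⟪x, a⟫_ℝ * Complex.I) ^ k / (k.factorial : ℂ)).aestronglyMeasurable.mul
          hf.ofReal.aestronglyMeasurable
    · filter_upwards [hμ] with x hx
      simp only [term, norm_mul, norm_div, norm_pow, Complex.norm_I, mul_one, Complex.norm_real,
        Real.norm_eq_abs, Complex.norm_natCast]
      gcongr
      exact (abs_real_inner_le_norm x a).trans (by gcongr)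
    · exact .of_forall fun x ↦ (Real.summable_pow_div_factorial _).mul_right _
    · simp_rw [tsum_mul_right]
      exact hf.abs.const_mul _
    · refine .of_forall fun x ↦ HasSum.mul_right _ ?_
      rw [Complex.exp_eq_exp_ℂ]
      exact NormedSpace.expSeries_div_hasSum_exp _
  exact hsum.unique (by simp [hterm, hasSum_zero])

end Moments

section Orbit

lemma isMulRightInvariant_of_isProbabilityMeasure {G : Type*} [Group G] [TopologicalSpace G]
    [IsTopologicalGroup G] [LocallyCompactSpace G] [MeasurableSpace G] [BorelSpace G]
    (η : Measure G) [η.IsHaarMeasure] [IsProbabilityMeasure η] : η.IsMulRightInvariant where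
  map_mul_right_eq_self g := by
    have : IsProbabilityMeasure (η.map (· * g)) :=
      Measure.isProbabilityMeasure_map (measurable_mul_const g).aemeasurable
    exact Measure.isHaarMeasure_eq_of_isProbabilityMeasure _ _

lemma exists_isProbabilityMeasure_invariant (G : Type*) [Group G] [TopologicalSpace G]
    [IsTopologicalGroup G] [CompactSpace G] [MeasurableSpace G] [BorelSpace G] :
    ∃ η : Measure G,
      IsProbabilityMeasure η ∧ η.IsMulLeftInvariant ∧ η.IsMulRightInvariant := by
  have : IsProbabilityMeasure (Measure.haarMeasure (⊤ : TopologicalSpace.PositiveCompacts G)) :=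
    ⟨Measure.haarMeasure_self⟩
  exact ⟨_, this, inferInstance, isMulRightInvariant_of_isProbabilityMeasure _⟩

variable {G α : Type*} [Group G] [MulAction G α] [MeasurableSpace G] [MeasurableSpace α]
  [MeasurableMul G] [MeasurableSMul₂ G α] (η : Measure G) [IsProbabilityMeasure η]

/- Averaging over `G` does not change `∫ f dμ`, and by right invariance of `η` it replaces `f` by
a constant on each orbit. -/
lemma eq_map_smul_of_ae_mem_orbit [η.IsMulRightInvariant] {μ : Measure α} [IsProbabilityMeasure μ]
    [SMulInvariantMeasure G α μ] {x₀ : α} (h : ∀ᵐ x ∂μ, x ∈ MulAction.orbit G x₀) :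
    μ = η.map (· • x₀) := by
  refine Measure.ext_of_lintegral _ fun f hf ↦ ?_
  have horbit : ∀ᵐ x ∂μ, ∫⁻ g, f (g • x) ∂η = ∫⁻ g, f (g • x₀) ∂η := by
    filter_upwards [h] with x ⟨k, hk⟩
    simp_rw [← hk, ← mul_smul]
    exact lintegral_mul_right_eq_self (fun g ↦ f (g • x₀)) k
  calc ∫⁻ x, f x ∂μ = ∫⁻ g, ∫⁻ x, f (g • x) ∂μ ∂η := by
        simp [(measurePreserving_smul _ μ).lintegral_comp hf]
    _ = ∫⁻ x, ∫⁻ g, f (g • x) ∂η ∂μ :=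
        lintegral_lintegral_swap (hf.comp measurable_smul).aemeasurable
    _ = ∫⁻ x, f x ∂η.map (· • x₀) := by
        rw [lintegral_congr_ae horbit, lintegral_const, measure_univ, mul_one,
          lintegral_map hf (measurable_smul_const x₀)]

end Orbit

section Isometries

variable {E : Type*} [NormedAddCommGroup E] [InnerProductSpace ℝ E]

lemma exists_linearIsometryEquiv_apply_eq {x y : E} (h : ‖x‖ = ‖y‖) :
    ∃ L : E ≃ₗᵢ[ℝ] E, L x = y :=
  ⟨_, Submodule.reflection_sub h⟩

lemma exists_linearIsometryEquiv_apply_pair_eq {x y x' y' : E} (hx : ‖x‖ = ‖x'‖)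
    (hy : ‖y‖ = ‖y'‖) (hxy : ⟪x, y⟫_ℝ = ⟪x', y'⟫_ℝ) :
    ∃ L : E ≃ₗᵢ[ℝ] E, L x = x' ∧ L y = y' := by
  obtain ⟨L, hLx⟩ := exists_linearIsometryEquiv_apply_eq hx
  have hfix : x' ∈ (ℝ ∙ (L y - y'))ᗮ := by
    rw [Submodule.mem_orthogonal_singleton_iff_inner_left, inner_sub_right, ← hxy, ← hLx,
      L.inner_map_map, sub_self]
  refine ⟨L.trans (ℝ ∙ (L y - y'))ᗮ.reflection, ?_, ?_⟩
  · simpa [hLx] using Submodule.reflection_mem_subspace_eq_self hfix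
  · exact Submodule.reflection_sub ((L.norm_map y).trans hy)

instance [CompleteSpace E] : ContinuousSMul (unitary (E →L[ℝ] E)) E where
  continuous_smul := by
    change Continuous fun p : unitary (E →L[ℝ] E) × E ↦ (p.1 : E →L[ℝ] E) p.2
    fun_prop

variable [FiniteDimensional ℝ E]

instance : CompactSpace (unitary (E →L[ℝ] E)) := by
  refine isCompact_iff_compactSpace.1 (Metric.isCompact_of_isClosed_isBounded isClosed_unitary ?_)
  refine isBounded_iff_forall_norm_le.2 ⟨1, fun u hu ↦ u.opNorm_le_bound zero_le_one fun x ↦ ?_⟩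
  rw [ContinuousLinearMap.norm_map_of_mem_unitary hu, one_mul]

end Isometries

section Sphere

variable {E : Type*} [NormedAddCommGroup E] [MeasurableSpace E] {ν : Measure E}

lemma memLp_of_continuous_of_ae_norm_eq_one [ProperSpace E] [BorelSpace E] [IsFiniteMeasure ν]
    (hν : ∀ᵐ x ∂ν, ‖x‖ = 1) {f : E → ℝ} (hf : Continuous f) (p : ENNReal) : MemLp f p ν := by
  obtain ⟨C, hC⟩ := (isCompact_sphere (0 : E) 1).exists_bound_of_continuousOn hf.continuousOn
  refine .of_bound hf.aestronglyMeasurable C ?_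
  filter_upwards [hν] with x hx using hC x (by simpa using hx)

variable [InnerProductSpace ℝ E]

/-- The measure `ν` is concentrated on the unit sphere and invariant under all linear isometries.
For a probability measure this characterizes the uniform distribution on the sphere. -/
structure IsUniformOnSphere (ν : Measure E) : Prop where
  ae_norm_eq_one : ∀ᵐ x ∂ν, ‖x‖ = 1
  map_eq (L : E ≃ₗᵢ[ℝ] E) : ν.map L = ν

/-- The `k`-th moment of a coordinate of a random vector with distribution `ν`. Averaging over the
direction of the coordinate as well avoids the choice of a unit vector. -/
noncomputable def sphereMoment (ν : Measure E) (k : ℕ) : ℝ :=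
  ∫ x, ∫ w, ⟪w, x⟫_ℝ ^ k ∂ν ∂ν

namespace IsUniformOnSphere

variable [BorelSpace E]

lemma integral_comp (hν : IsUniformOnSphere ν) (L : E ≃ₗᵢ[ℝ] E) (f : E → ℝ) :
    ∫ x, f (L x) ∂ν = ∫ x, f x ∂ν := by
  have := L.toHomeomorph.measurableEmbedding.integral_map (μ := ν) f
  rwa [L.coe_toHomeomorph, hν.map_eq L, eq_comm] at this

lemma sphereMoment_of_odd (hν : IsUniformOnSphere ν) {k : ℕ} (hk : Odd k) :
    sphereMoment ν k = 0 := by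
  have hneg (x : E) : ∫ w, ⟪w, x⟫_ℝ ^ k ∂ν = 0 := by
    have := hν.integral_comp (.neg ℝ) fun w ↦ ⟪w, x⟫_ℝ ^ k
    simp_rw [LinearIsometryEquiv.coe_neg, inner_neg_left, hk.neg_pow, integral_neg] at this
    linarith
  simp [sphereMoment, hneg]

variable [IsProbabilityMeasure ν]

lemma integral_inner_pow (hν : IsUniformOnSphere ν) (v : E) (k : ℕ) :
    ∫ w, ⟪w, v⟫_ℝ ^ k ∂ν = sphereMoment ν k * ‖v‖ ^ k := by
  have hunit : ∀ᵐ x ∂ν, ∫ w, ⟪w, v⟫_ℝ ^ k ∂ν = (∫ w, ⟪w, x⟫_ℝ ^ k ∂ν) * ‖v‖ ^ k := by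
    filter_upwards [hν.ae_norm_eq_one] with x hx
    obtain ⟨L, hL⟩ :=
      exists_linearIsometryEquiv_apply_eq (x := ‖v‖ • x) (y := v) (by simp [norm_smul, hx])
    have hinner (w : E) : ⟪L w, v⟫_ℝ = ⟪w, x⟫_ℝ * ‖v‖ := by
      rw [← congrArg (inner ℝ (L w)) hL, L.inner_map_map, real_inner_smul_right, mul_comm]
    rw [← hν.integral_comp L]
    simp_rw [hinner, mul_pow, integral_mul_const]
  simpa [sphereMoment, integral_mul_const] using integral_congr_ae hunit

variable [FiniteDimensional ℝ E]

lemma integrable_inner_pow (hν : IsUniformOnSphere ν) (v : E) (k : ℕ) :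
    Integrable (fun w ↦ ⟪w, v⟫_ℝ ^ k) ν :=
  (memLp_of_continuous_of_ae_norm_eq_one hν.ae_norm_eq_one (by fun_prop) 1).integrable le_rfl

lemma sphereMoment_two (hν : IsUniformOnSphere ν) :
    sphereMoment ν 2 = 1 / Module.finrank ℝ E := by
  have hsum : ∑ i, ∫ w, ⟪w, stdOrthonormalBasis ℝ E i⟫_ℝ ^ 2 ∂ν = 1 := by
    rw [← integral_finsetSum _ fun i _ ↦ hν.integrable_inner_pow _ 2]
    have hnorm : ∀ᵐ w ∂ν, ∑ i, ⟪w, stdOrthonormalBasis ℝ E i⟫_ℝ ^ 2 = 1 := by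
      filter_upwards [hν.ae_norm_eq_one] with w hw
      rw [(stdOrthonormalBasis ℝ E).sum_sq_inner_left, hw, one_pow]
    simp [integral_congr_ae hnorm]
  refine eq_one_div_of_mul_eq_one_right ?_
  simpa [hν.integral_inner_pow] using hsum

lemma abs_sphereMoment_le (hν : IsUniformOnSphere ν) {k : ℕ} (hk : 1 ≤ k) :
    |sphereMoment ν k| ≤ 1 / Module.finrank ℝ E := by
  obtain rfl | hk := hk.eq_or_lt
  · simp [hν.sphereMoment_of_odd odd_one]
  obtain ⟨v, hv⟩ := hν.ae_norm_eq_one.exists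
  have hmoment (j : ℕ) : ∫ w, ⟪w, v⟫_ℝ ^ j ∂ν = sphereMoment ν j := by
    simp [hν.integral_inner_pow, hv]
  rw [← hν.sphereMoment_two, ← hmoment k, ← hmoment 2]
  refine abs_integral_le_integral_abs.trans (integral_mono_ae
    (hν.integrable_inner_pow v k).abs (hν.integrable_inner_pow v 2) ?_)
  filter_upwards [hν.ae_norm_eq_one] with w hw
  have hle : |⟪w, v⟫_ℝ| ≤ 1 := by simpa [hw, hv] using abs_real_inner_le_norm w v
  simpa [abs_pow] using pow_le_pow_of_le_one (abs_nonneg _) hle hk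

end IsUniformOnSphere

lemma exists_isUniformOnSphere (E : Type*) [NormedAddCommGroup E] [InnerProductSpace ℝ E]
    [FiniteDimensional ℝ E] [MeasurableSpace E] [BorelSpace E] [Nontrivial E] :
    ∃ ν : Measure E, IsProbabilityMeasure ν ∧ IsUniformOnSphere ν := by
  obtain ⟨η, _, _, -⟩ := exists_isProbabilityMeasure_invariant (unitary (E →L[ℝ] E))
  obtain ⟨w, hw⟩ := exists_norm_eq E zero_le_one
  have hw_meas : Measurable fun g : unitary (E →L[ℝ] E) ↦ g • w := measurable_id.smul_const w
  refine ⟨η.map (· • w), Measure.isProbabilityMeasure_map hw_meas.aemeasurable, ?_, fun L ↦ ?_⟩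
  · refine (ae_map_iff hw_meas.aemeasurable (measurableSet_eq_fun measurable_norm
      measurable_const)).2 (.of_forall fun g ↦ ?_)
    exact ((Unitary.linearIsometryEquiv g).norm_map w).trans hw
  · have hsmul : (L : E → E) ∘ (fun g : unitary (E →L[ℝ] E) ↦ g • w)
        = (fun g ↦ g • w) ∘ (Unitary.linearIsometryEquiv.symm L * ·) := rfl
    rw [Measure.map_map L.continuous.measurable hw_meas, hsmul,
      ← Measure.map_map hw_meas (measurable_const_mul _), map_mul_left_eq_self]

end Sphere

lemma integral_comp_of_measurePreserving {α β F : Type*} [MeasurableSpace α] [MeasurableSpace β]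
    [NormedAddCommGroup F] [NormedSpace ℝ F] {μ : Measure α} {ν : Measure β} {X : α → β}
    (hX : MeasurePreserving X μ ν) {f : β → F} (hf : AEStronglyMeasurable f ν) :
    ∫ x, f (X x) ∂μ = ∫ y, f y ∂ν := by
  rw [← hX.map_eq] at hf ⊢
  exact (integral_map hX.aemeasurable hf).symm

section OrthonormalPair

variable {E : Type*} [NormedAddCommGroup E] [InnerProductSpace ℝ E]

lemma norm_orthogonalProjectionOnto_orthogonal_singleton {y : E} (hy : ‖y‖ = 1) (z : E) :
    ‖(ℝ ∙ y)ᗮ.orthogonalProjectionOnto z‖ = √(‖z‖ ^ 2 - ⟪y, z⟫_ℝ ^ 2) := by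
  have h := Submodule.norm_sq_eq_add_norm_sq_projection z (ℝ ∙ y)
  have hproj : ‖(ℝ ∙ y).orthogonalProjectionOnto z‖ ^ 2 = ⟪y, z⟫_ℝ ^ 2 := by
    rw [← Submodule.norm_coe, Submodule.coe_orthogonalProjectionOnto_apply,
      Submodule.starProjection_unit_singleton ℝ hy, norm_smul, hy, mul_one, Real.norm_eq_abs,
      sq_abs]
  rw [h, hproj, add_sub_cancel_left, Real.sqrt_sq (norm_nonneg _)]

lemma IsUniformOnSphere.integral_inner_isometry_pow [MeasurableSpace E] [BorelSpace E] {y : E}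
    (hy : ‖y‖ = 1) {ν : Measure (ℝ ∙ y)ᗮ} [IsProbabilityMeasure ν] (hν : IsUniformOnSphere ν)
    (L : E ≃ₗᵢ[ℝ] E) (a : E) (k : ℕ) :
    ∫ w, ⟪L w, a⟫_ℝ ^ k ∂ν = sphereMoment ν k * √(‖a‖ ^ 2 - ⟪L y, a⟫_ℝ ^ 2) ^ k := by
  have hinner (z : E) : ⟪L z, a⟫_ℝ = ⟪z, L.symm a⟫_ℝ := by
    rw [← L.inner_map_map z, L.apply_symm_apply]
  simp_rw [hinner, ← Submodule.inner_orthogonalProjectionOnto_eq_of_mem_left]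
  rw [hν.integral_inner_pow, norm_orthogonalProjectionOnto_orthogonal_singleton hy,
    L.symm.norm_map]

lemma IsUniformOnSphere.integrable_inner_smul_pow_mul [FiniteDimensional ℝ E] [MeasurableSpace E]
    [BorelSpace E] {F : Submodule ℝ E} {ν : Measure F} [IsFiniteMeasure ν]
    (hν : IsUniformOnSphere ν) {η : Measure (unitary (E →L[ℝ] E))} [SFinite η]
    {h : unitary (E →L[ℝ] E) → ℝ} (hh : Integrable h η) (a : E) (k : ℕ) :
    Integrable (fun q : F × unitary (E →L[ℝ] E) ↦ ⟪q.2 • (q.1 : E), a⟫_ℝ ^ k * h q.2)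
      (ν.prod η) := by
  refine (hh.comp_snd ν).bdd_mul (c := ‖a‖ ^ k) (by fun_prop) ?_
  filter_upwards [Measure.quasiMeasurePreserving_fst.ae hν.ae_norm_eq_one] with q hq
  have hq₁ : ‖q.2 • (q.1 : E)‖ = 1 := ((Unitary.linearIsometryEquiv q.2).norm_map _).trans hq
  have hinner : |⟪q.2 • (q.1 : E), a⟫_ℝ| ≤ ‖a‖ := by
    simpa [hq₁] using abs_real_inner_le_norm (q.2 • (q.1 : E)) a
  rw [norm_pow, Real.norm_eq_abs]
  gcongr

variable [MeasurableSpace E] {ρ : Measure (E × E)}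

/-- The measure `ρ` on `E × E` is concentrated on the orthonormal pairs and invariant under the
diagonal action of the linear isometries. For a probability measure this means that `ρ` is the joint
distribution of two distinct vectors of a uniformly random orthonormal basis. -/
structure IsUniformOrthonormalPair (ρ : Measure (E × E)) : Prop where
  ae_norm_fst : ∀ᵐ p ∂ρ, ‖p.1‖ = 1
  ae_norm_snd : ∀ᵐ p ∂ρ, ‖p.2‖ = 1
  ae_inner_eq_zero : ∀ᵐ p ∂ρ, ⟪p.1, p.2⟫_ℝ = 0
  map_eq (L : E ≃ₗᵢ[ℝ] E) : ρ.map (Prod.map L L) = ρ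

namespace IsUniformOrthonormalPair

lemma exists_orthonormal [NeZero ρ] (hρ : IsUniformOrthonormalPair ρ) :
    ∃ x y : E, ‖x‖ = 1 ∧ ‖y‖ = 1 ∧ ⟪x, y⟫_ℝ = 0 := by
  obtain ⟨p, h⟩ := (hρ.ae_norm_fst.and (hρ.ae_norm_snd.and hρ.ae_inner_eq_zero)).exists
  exact ⟨p.1, p.2, h⟩

variable [BorelSpace E] [FiniteDimensional ℝ E]

lemma map_swap (hρ : IsUniformOrthonormalPair ρ) : IsUniformOrthonormalPair (ρ.map Prod.swap) where
  ae_norm_fst := (ae_map_iff measurable_swap.aemeasurable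
    (measurableSet_eq_fun (by fun_prop) (by fun_prop))).2 hρ.ae_norm_snd
  ae_norm_snd := (ae_map_iff measurable_swap.aemeasurable
    (measurableSet_eq_fun (by fun_prop) (by fun_prop))).2 hρ.ae_norm_fst
  ae_inner_eq_zero := by
    refine (ae_map_iff measurable_swap.aemeasurable
      (measurableSet_eq_fun (by fun_prop) (by fun_prop))).2 ?_
    filter_upwards [hρ.ae_inner_eq_zero] with p hp using (real_inner_comm _ _).trans hp
  map_eq L := by
    have hL : Measurable L := L.continuous.measurable
    rw [Measure.map_map (hL.prodMap hL) measurable_swap, Prod.map_comp_swap,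
      ← Measure.map_map measurable_swap (hL.prodMap hL), hρ.map_eq]

lemma smulInvariantMeasure (hρ : IsUniformOrthonormalPair ρ) :
    SMulInvariantMeasure (unitary (E →L[ℝ] E)) (E × E) ρ where
  measure_preimage_smul g s hs := by
    rw [← Measure.map_apply (measurable_const_smul g) hs]
    exact congrArg (· s) (hρ.map_eq (Unitary.linearIsometryEquiv g))

variable [IsProbabilityMeasure ρ]

lemma measurePreserving_smul (hρ : IsUniformOrthonormalPair ρ)
    (η : Measure (unitary (E →L[ℝ] E))) [IsProbabilityMeasure η] [η.IsMulRightInvariant] {x y : E}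
    (hx : ‖x‖ = 1) (hy : ‖y‖ = 1) (hxy : ⟪x, y⟫_ℝ = 0) :
    MeasurePreserving (fun g : unitary (E →L[ℝ] E) ↦ (g • x, g • y)) η ρ := by
  have := hρ.smulInvariantMeasure
  refine ⟨by fun_prop, (eq_map_smul_of_ae_mem_orbit η (x₀ := (x, y)) ?_).symm⟩
  filter_upwards [hρ.ae_norm_fst, hρ.ae_norm_snd, hρ.ae_inner_eq_zero] with p hp₁ hp₂ hp
  obtain ⟨L, hL₁, hL₂⟩ := exists_linearIsometryEquiv_apply_pair_eq (hx.trans hp₁.symm)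
    (hy.trans hp₂.symm) (hxy.trans hp.symm)
  exact ⟨Unitary.linearIsometryEquiv.symm L, Prod.ext hL₁ hL₂⟩

lemma map_swap_eq (hρ : IsUniformOrthonormalPair ρ) : ρ.map Prod.swap = ρ := by
  obtain ⟨η, _, -, _⟩ := exists_isProbabilityMeasure_invariant (unitary (E →L[ℝ] E))
  obtain ⟨x, y, hx, hy, hxy⟩ := hρ.exists_orthonormal
  have := Measure.isProbabilityMeasure_map (μ := ρ) measurable_swap.aemeasurable
  rw [← (hρ.map_swap.measurePreserving_smul η hx hy hxy).map_eq,
    (hρ.measurePreserving_smul η hx hy hxy).map_eq]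

lemma measurePreserving_swap (hρ : IsUniformOrthonormalPair ρ) :
    MeasurePreserving Prod.swap ρ ρ :=
  ⟨measurable_swap, hρ.map_swap_eq⟩

lemma measurePreserving_snd (hρ : IsUniformOrthonormalPair ρ) :
    MeasurePreserving Prod.snd ρ ρ.fst := by
  have hfst : MeasurePreserving Prod.fst ρ ρ.fst := ⟨measurable_fst, rfl⟩
  exact hfst.comp hρ.measurePreserving_swap

/- Condition on the second vector: the first one is then uniform on the unit sphere of its
orthogonal complement. Concretely, the pair is `(g w, g y)` for a Haar-random `g` and *any* unit
vector `w ⟂ y`, so `w` may be averaged over that sphere. -/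
lemma integral_inner_pow_mul (hρ : IsUniformOrthonormalPair ρ) {y : E} (hy : ‖y‖ = 1)
    {ν : Measure (ℝ ∙ y)ᗮ} [IsProbabilityMeasure ν] (hν : IsUniformOnSphere ν) {f : E → ℝ}
    (hf : Integrable f ρ.fst) (a : E) (k : ℕ) :
    ∫ p, ⟪p.1, a⟫_ℝ ^ k * f p.2 ∂ρ
      = sphereMoment ν k * ∫ x, √(‖a‖ ^ 2 - ⟪x, a⟫_ℝ ^ 2) ^ k * f x ∂ρ.fst := by
  obtain ⟨η, _, -, _⟩ := exists_isProbabilityMeasure_invariant (unitary (E →L[ℝ] E))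
  have hpair : ∀ᵐ w : (ℝ ∙ y)ᗮ ∂ν,
      MeasurePreserving (fun g : unitary (E →L[ℝ] E) ↦ (g • (w : E), g • y)) η ρ := by
    filter_upwards [hν.ae_norm_eq_one] with w hw
    exact hρ.measurePreserving_smul η hw hy
      (Submodule.mem_orthogonal_singleton_iff_inner_left.1 w.2)
  have hmeas : AEStronglyMeasurable (fun p : E × E ↦ ⟪p.1, a⟫_ℝ ^ k * f p.2) ρ :=
    (by fun_prop : Continuous fun p : E × E ↦ ⟪p.1, a⟫_ℝ ^ k).aestronglyMeasurable.mul
      (hf.1.comp_measurePreserving hρ.measurePreserving_snd)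
  obtain ⟨w₀, hw₀⟩ := hpair.exists
  have hsnd : MeasurePreserving (fun g : unitary (E →L[ℝ] E) ↦ g • y) η ρ.fst :=
    hρ.measurePreserving_snd.comp hw₀
  calc ∫ p, ⟪p.1, a⟫_ℝ ^ k * f p.2 ∂ρ
      = ∫ w, ∫ g : unitary (E →L[ℝ] E), ⟪g • (w : E), a⟫_ℝ ^ k * f (g • y) ∂η ∂ν := by
        have hconst : ∀ᵐ w : (ℝ ∙ y)ᗮ ∂ν, ∫ p, ⟪p.1, a⟫_ℝ ^ k * f p.2 ∂ρ
            = ∫ g : unitary (E →L[ℝ] E), ⟪g • (w : E), a⟫_ℝ ^ k * f (g • y) ∂η :=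
          hpair.mono fun w hw ↦ (integral_comp_of_measurePreserving hw hmeas).symm
        simp [← integral_congr_ae hconst]
    _ = ∫ g : unitary (E →L[ℝ] E), ∫ w, ⟪g • (w : E), a⟫_ℝ ^ k * f (g • y) ∂ν ∂η :=
        integral_integral_swap (hν.integrable_inner_smul_pow_mul
          (hsnd.integrable_comp_of_integrable hf) a k)
    _ = sphereMoment ν k * ∫ g : unitary (E →L[ℝ] E),
          √(‖a‖ ^ 2 - ⟪g • y, a⟫_ℝ ^ 2) ^ k * f (g • y) ∂η := by
        simp_rw [integral_mul_const, ← integral_const_mul, ← mul_assoc]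
        congr with g
        congr 1
        exact hν.integral_inner_isometry_pow hy (Unitary.linearIsometryEquiv g) a k
    _ = sphereMoment ν k * ∫ x, √(‖a‖ ^ 2 - ⟪x, a⟫_ℝ ^ 2) ^ k * f x ∂ρ.fst := by
        rw [integral_comp_of_measurePreserving hsnd (by fun_prop)
          (f := fun x ↦ √(‖a‖ ^ 2 - ⟪x, a⟫_ℝ ^ 2) ^ k * f x)]

end IsUniformOrthonormalPair

end OrthonormalPair

section CorrelationOperator

variable {Ω α β : Type*} [MeasurableSpace Ω] [MeasurableSpace α] [MeasurableSpace β]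
  {μ : Measure Ω} {u : Measure α} {v : Measure β} {X : Ω → α} {Y : Ω → β}

/-- The operator `L²(u) → L²(v)` sending `f` to the conditional expectation of `f (X)` given `Y`,
where `u` and `v` are the distributions of `X` and `Y`. It is encoded as `B* A`, where `A` and `B`
are the isometric embeddings `f ↦ f ∘ X` and `g ↦ g ∘ Y` into `L²(μ)`. -/
noncomputable def correlationOp (hX : MeasurePreserving X μ u) (hY : MeasurePreserving Y μ v) :
    Lp ℝ 2 u →L[ℝ] Lp ℝ 2 v :=
  (Lp.compMeasurePreservingₗᵢ ℝ Y hY).toContinuousLinearMap.adjoint ∘L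
    (Lp.compMeasurePreservingₗᵢ ℝ X hX).toContinuousLinearMap

lemma inner_correlationOp (hX : MeasurePreserving X μ u) (hY : MeasurePreserving Y μ v)
    (f : Lp ℝ 2 u) (g : Lp ℝ 2 v) :
    ⟪correlationOp hX hY f, g⟫_ℝ = ∫ ω, f (X ω) * g (Y ω) ∂μ := by
  rw [correlationOp, ContinuousLinearMap.comp_apply, ContinuousLinearMap.adjoint_inner_left,
    L2.inner_def]
  refine integral_congr_ae ?_
  filter_upwards [Lp.coeFn_compMeasurePreserving f hX, Lp.coeFn_compMeasurePreserving g hY]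
    with ω hf hg
  change ⟪(Lp.compMeasurePreserving X hX f) ω, (Lp.compMeasurePreserving Y hY g) ω⟫_ℝ = _
  rw [hf, hg]
  exact mul_comm _ _

lemma inner_correlationOp_toLp (hX : MeasurePreserving X μ u) (hY : MeasurePreserving Y μ v)
    {f : α → ℝ} (hf : MemLp f 2 u) (g : Lp ℝ 2 v) :
    ⟪correlationOp hX hY (hf.toLp f), g⟫_ℝ = ∫ ω, f (X ω) * g (Y ω) ∂μ := by
  rw [inner_correlationOp]
  refine integral_congr_ae ?_
  filter_upwards [hX.quasiMeasurePreserving.ae hf.coeFn_toLp] with ω hω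
  rw [hω]

lemma isSymmetric_correlationOp {X Y : Ω → α} (hX : MeasurePreserving X μ u)
    (hY : MeasurePreserving Y μ u) {σ : Ω → Ω} (hσ : MeasurePreserving σ μ μ)
    (hXσ : X ∘ σ = Y) (hYσ : Y ∘ σ = X) :
    (correlationOp hX hY : Lp ℝ 2 u →ₗ[ℝ] Lp ℝ 2 u).IsSymmetric := by
  intro f g
  have hmeas : AEStronglyMeasurable (fun ω ↦ f (X ω) * g (Y ω)) μ :=
    ((Lp.aestronglyMeasurable f).comp_measurePreserving hX).mul
      ((Lp.aestronglyMeasurable g).comp_measurePreserving hY)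
  calc ⟪correlationOp hX hY f, g⟫_ℝ = ∫ ω, f (X ω) * g (Y ω) ∂μ := inner_correlationOp hX hY f g
    _ = ∫ ω, f (X (σ ω)) * g (Y (σ ω)) ∂μ := (integral_comp_of_measurePreserving hσ hmeas).symm
    _ = ∫ ω, g (X ω) * f (Y ω) ∂μ := by
        simp_rw [← Function.comp_apply (g := σ) (f := X), ← Function.comp_apply (g := σ) (f := Y),
          hXσ, hYσ, mul_comm]
    _ = ⟪f, correlationOp hX hY g⟫_ℝ := by rw [real_inner_comm, inner_correlationOp]

end CorrelationOperator

section Ridge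

lemma X_pow_mem_degreeLT {R : Type*} [Semiring R] {j k : ℕ} (h : j < k) :
    (Polynomial.X ^ j : R[X]) ∈ Polynomial.degreeLT R k :=
  Polynomial.mem_degreeLT.2 ((Polynomial.degree_X_pow_le j).trans_lt (mod_cast h))

open Polynomial in
lemma C_sub_X_sq_pow_sub_mem_degreeLT {R : Type*} [CommRing R] [Nontrivial R] (b : R) (j : ℕ) :
    (C b - X ^ 2) ^ j - (-1 : R) ^ j • X ^ (2 * j) ∈ degreeLT R (2 * j) := by
  have hmonic : ((X ^ 2 - C b) ^ j).Monic := (monic_X_pow_sub_C b two_ne_zero).pow j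
  have hdeg : ((X ^ 2 - C b) ^ j).degree = ((2 * j : ℕ) : WithBot ℕ) := by
    rw [degree_eq_natDegree hmonic.ne_zero, (monic_X_pow_sub_C b two_ne_zero).natDegree_pow,
      natDegree_X_pow_sub_C, mul_comm]
  have hfactor : (C b - X ^ 2) ^ j - (-1 : R) ^ j • X ^ (2 * j)
      = (-1 : R) ^ j • ((X ^ 2 - C b) ^ j - X ^ (2 * j)) := by
    rw [← neg_sub (X ^ 2), neg_pow, smul_sub]
    simp [smul_eq_C_mul]
  rw [hfactor]
  refine (degreeLT R (2 * j)).smul_mem _ (mem_degreeLT.2 ?_)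
  rw [← hdeg]
  exact degree_sub_lt_left (by rw [hdeg, degree_X_pow]) hmonic.ne_zero (by simp [hmonic])

variable {E : Type*} [NormedAddCommGroup E] [InnerProductSpace ℝ E] [ProperSpace E]
  [MeasurableSpace E] [BorelSpace E] {u : Measure E} [IsFiniteMeasure u]

lemma memLp_eval_inner (hu : ∀ᵐ x ∂u, ‖x‖ = 1) (a : E) (p : ℝ[X]) :
    MemLp (fun x ↦ p.eval ⟪x, a⟫_ℝ) 2 u :=
  memLp_of_continuous_of_ae_norm_eq_one hu
    (p.continuous.comp (continuous_id.inner continuous_const)) 2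

/-- The ridge function `x ↦ p ⟪x, a⟫` as an element of `L²(u)`, for `u` concentrated on the unit
sphere. -/
noncomputable def ridge (hu : ∀ᵐ x ∂u, ‖x‖ = 1) (a : E) : ℝ[X] →ₗ[ℝ] Lp ℝ 2 u where
  toFun p := (memLp_eval_inner hu a p).toLp _
  map_add' p q := by
    rw [← MemLp.toLp_add]
    exact MemLp.toLp_congr _ _ (.of_forall fun x ↦ Polynomial.eval_add)
  map_smul' c p := by
    rw [← MemLp.toLp_const_smul]
    exact MemLp.toLp_congr _ _ (.of_forall fun x ↦ Polynomial.eval_smul _ _ _)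

/-- The polynomials of degree less than `k` as a subspace of `L²(u)`; by polarization they are
spanned by ridge functions. -/
noncomputable def ridgeFiltration (hu : ∀ᵐ x ∂u, ‖x‖ = 1) (k : ℕ) : Submodule ℝ (Lp ℝ 2 u) :=
  ⨆ a, (Polynomial.degreeLT ℝ k).map (ridge hu a)

variable (hu : ∀ᵐ x ∂u, ‖x‖ = 1)

lemma ridge_mem_ridgeFiltration (a : E) {p : ℝ[X]} {k : ℕ} (hp : p ∈ Polynomial.degreeLT ℝ k) :
    ridge hu a p ∈ ridgeFiltration hu k :=
  Submodule.mem_iSup_of_mem a (Submodule.mem_map_of_mem hp)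

lemma ridgeFiltration_mono : Monotone (ridgeFiltration hu) := fun _ _ h ↦
  iSup_mono fun _ ↦ Submodule.map_mono (Polynomial.degreeLT_mono h)

lemma ridgeFiltration_zero : ridgeFiltration hu 0 = ⊥ := by
  simp [ridgeFiltration, Polynomial.degreeLT_eq_span_X_pow]

lemma ridgeFiltration_le_iff {k : ℕ} {W : Submodule ℝ (Lp ℝ 2 u)} :
    ridgeFiltration hu k ≤ W ↔ ∀ a, ∀ j < k, ridge hu a (Polynomial.X ^ j) ∈ W := by
  simp [ridgeFiltration, Submodule.map_le_iff_le_comap, Polynomial.degreeLT_eq_span_X_pow,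
    Submodule.span_le, Set.subset_def]

lemma inner_ridge (a : E) (p : ℝ[X]) (f : Lp ℝ 2 u) :
    ⟪ridge hu a p, f⟫_ℝ = ∫ x, p.eval ⟪x, a⟫_ℝ * f x ∂u := by
  rw [L2.inner_def]
  refine integral_congr_ae ?_
  filter_upwards [(memLp_eval_inner hu a p).coeFn_toLp] with x hx
  exact (mul_comm _ _).trans (congrArg (· * f x) hx)

lemma toLp_mem_orthogonal_ridgeFiltration_one {f : E → ℝ} (hf : MemLp f 2 u)
    (hf₀ : ∫ x, f x ∂u = 0) : hf.toLp f ∈ (ridgeFiltration hu 1)ᗮ := by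
  rw [← Submodule.span_singleton_le_iff_mem, ← Submodule.isOrtho_iff_le, Submodule.isOrtho_comm,
    Submodule.isOrtho_iff_le, ridgeFiltration_le_iff]
  intro a j hj
  rw [Submodule.mem_orthogonal_singleton_iff_inner_left, inner_ridge, Nat.lt_one_iff.1 hj]
  simpa [integral_congr_ae hf.coeFn_toLp] using hf₀

lemma topologicalClosure_iSup_ridgeFiltration :
    (⨆ k, ridgeFiltration hu k).topologicalClosure = ⊤ := by
  refine Submodule.topologicalClosure_eq_top_iff.2 ((Submodule.eq_bot_iff _).2 fun f hf ↦ ?_)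
  have hmoment (a : E) (k : ℕ) : ∫ x, ⟪x, a⟫_ℝ ^ k * f x ∂u = 0 := by
    have := hf _ (Submodule.mem_iSup_of_mem (k + 1)
      (ridge_mem_ridgeFiltration hu a (X_pow_mem_degreeLT k.lt_succ_self)))
    simpa [inner_ridge] using this
  have hint : Integrable f u := (Lp.memLp f).integrable one_le_two
  exact (Lp.eq_zero_iff_ae_eq_zero).2 (ae_eq_zero_of_integral_exp_inner_eq_zero hint fun a ↦
    integral_exp_inner_eq_zero_of_forall_integral_pow_inner_eq_zero
      (hu.mono fun x hx ↦ hx.le) hint (hmoment a))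

end Ridge

section Covariance

variable {E : Type*} [NormedAddCommGroup E] [InnerProductSpace ℝ E]

lemma finrank_orthogonal_singleton [FiniteDimensional ℝ E] {y : E} (hy : y ≠ 0) :
    (Module.finrank ℝ (ℝ ∙ y)ᗮ : ℝ) = Module.finrank ℝ E - 1 := by
  have h := (ℝ ∙ y).finrank_add_finrank_orthogonal
  rw [finrank_span_singleton hy] at h
  exact eq_sub_of_add_eq' (mod_cast h)

variable [MeasurableSpace E] {ρ : Measure (E × E)}

namespace IsUniformOrthonormalPair

variable [BorelSpace E]

lemma ae_fst_norm_eq_one (hρ : IsUniformOrthonormalPair ρ) : ∀ᵐ x ∂ρ.fst, ‖x‖ = 1 :=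
  (ae_map_iff measurable_fst.aemeasurable
    (measurableSet_eq_fun measurable_norm measurable_const)).2 hρ.ae_norm_fst

variable [FiniteDimensional ℝ E] [IsProbabilityMeasure ρ]

/-- The operator sending `f` to the conditional expectation of `f x` given `y`, where `(x, y)` has
distribution `ρ`. -/
noncomputable def condOp (hρ : IsUniformOrthonormalPair ρ) : Lp ℝ 2 ρ.fst →L[ℝ] Lp ℝ 2 ρ.fst :=
  correlationOp (X := Prod.fst) ⟨measurable_fst, rfl⟩ hρ.measurePreserving_snd

lemma isSymmetric_condOp (hρ : IsUniformOrthonormalPair ρ) :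
    (hρ.condOp : Lp ℝ 2 ρ.fst →ₗ[ℝ] Lp ℝ 2 ρ.fst).IsSymmetric :=
  isSymmetric_correlationOp _ _ hρ.measurePreserving_swap rfl rfl

section Eigenvalues

variable {y : E} {ν : Measure (ℝ ∙ y)ᗮ} [IsProbabilityMeasure ν]

lemma inner_condOp_ridge_X_pow (hρ : IsUniformOrthonormalPair ρ) (hy : ‖y‖ = 1)
    (hν : IsUniformOnSphere ν) (a : E) (k : ℕ) (f : Lp ℝ 2 ρ.fst) :
    ⟪hρ.condOp (ridge hρ.ae_fst_norm_eq_one a (Polynomial.X ^ k)), f⟫_ℝ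
      = sphereMoment ν k * ∫ x, √(‖a‖ ^ 2 - ⟪x, a⟫_ℝ ^ 2) ^ k * f x ∂ρ.fst := by
  rw [← hρ.integral_inner_pow_mul hy hν ((Lp.memLp f).integrable one_le_two)]
  refine (inner_correlationOp_toLp _ _
    (memLp_eval_inner hρ.ae_fst_norm_eq_one a (Polynomial.X ^ k)) f).trans ?_
  simp

lemma condOp_ridge_X_pow_of_odd (hρ : IsUniformOrthonormalPair ρ) (hy : ‖y‖ = 1)
    (hν : IsUniformOnSphere ν) (a : E) {k : ℕ} (hk : Odd k) :
    hρ.condOp (ridge hρ.ae_fst_norm_eq_one a (Polynomial.X ^ k)) = 0 := by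
  refine ext_inner_right ℝ fun f ↦ ?_
  rw [hρ.inner_condOp_ridge_X_pow hy hν, hν.sphereMoment_of_odd hk, zero_mul, inner_zero_left]

lemma condOp_ridge_X_pow_two_mul (hρ : IsUniformOrthonormalPair ρ) (hy : ‖y‖ = 1)
    (hν : IsUniformOnSphere ν) (a : E) (j : ℕ) :
    hρ.condOp (ridge hρ.ae_fst_norm_eq_one a (Polynomial.X ^ (2 * j)))
      = sphereMoment ν (2 * j) • ridge hρ.ae_fst_norm_eq_one a
        ((Polynomial.C (‖a‖ ^ 2) - Polynomial.X ^ 2) ^ j) := by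
  refine ext_inner_right ℝ fun f ↦ ?_
  have hsqrt : ∫ x, √(‖a‖ ^ 2 - ⟪x, a⟫_ℝ ^ 2) ^ (2 * j) * f x ∂ρ.fst
      = ∫ x, (‖a‖ ^ 2 - ⟪x, a⟫_ℝ ^ 2) ^ j * f x ∂ρ.fst := by
    refine integral_congr_ae ?_
    filter_upwards [hρ.ae_fst_norm_eq_one] with x hx
    have hle : |⟪x, a⟫_ℝ| ≤ ‖a‖ := by simpa [hx] using abs_real_inner_le_norm x a
    rw [pow_mul, Real.sq_sqrt (sub_nonneg.2 (sq_le_sq.2 (hle.trans (le_abs_self _))))]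
  rw [hρ.inner_condOp_ridge_X_pow hy hν, hsqrt, real_inner_smul_left, inner_ridge]
  simp

lemma condOp_ridge_X_pow_sub_smul_mem (hρ : IsUniformOrthonormalPair ρ) (hy : ‖y‖ = 1)
    (hν : IsUniformOnSphere ν) (a : E) (k : ℕ) :
    hρ.condOp (ridge hρ.ae_fst_norm_eq_one a (Polynomial.X ^ k))
        - ((-1) ^ (k / 2) * sphereMoment ν k) • ridge hρ.ae_fst_norm_eq_one a (Polynomial.X ^ k)
      ∈ ridgeFiltration hρ.ae_fst_norm_eq_one k := by
  obtain ⟨j, rfl | rfl⟩ := k.even_or_odd'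
  · have hmem := ridge_mem_ridgeFiltration hρ.ae_fst_norm_eq_one a
      (C_sub_X_sq_pow_sub_mem_degreeLT (‖a‖ ^ 2) j)
    convert Submodule.smul_mem _ (sphereMoment ν (2 * j)) hmem using 1
    rw [hρ.condOp_ridge_X_pow_two_mul hy hν, map_sub, map_smul, smul_sub, smul_smul,
      Nat.mul_div_cancel_left j two_pos, mul_comm (sphereMoment ν _)]
  · have hodd := odd_two_mul_add_one j
    simp [hρ.condOp_ridge_X_pow_of_odd hy hν a hodd, hν.sphereMoment_of_odd hodd]

lemma condOp_sub_smul_mem (hρ : IsUniformOrthonormalPair ρ) (hy : ‖y‖ = 1)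
    (hν : IsUniformOnSphere ν) (k : ℕ) {f : Lp ℝ 2 ρ.fst}
    (hf : f ∈ ridgeFiltration hρ.ae_fst_norm_eq_one (k + 1)) :
    hρ.condOp f - ((-1) ^ (k / 2) * sphereMoment ν k) • f
      ∈ ridgeFiltration hρ.ae_fst_norm_eq_one k := by
  set V := ridgeFiltration hρ.ae_fst_norm_eq_one
  have hlower (a : E) (j : ℕ) (hj : j < k) (c : ℝ) :
      c • ridge hρ.ae_fst_norm_eq_one a (Polynomial.X ^ j) ∈ V k :=
    (V k).smul_mem c (ridge_mem_ridgeFiltration _ a (X_pow_mem_degreeLT hj))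
  suffices V (k + 1) ≤ (V k).comap ((hρ.condOp : Lp ℝ 2 ρ.fst →ₗ[ℝ] Lp ℝ 2 ρ.fst)
      - ((-1) ^ (k / 2) * sphereMoment ν k) • LinearMap.id) from this hf
  refine (ridgeFiltration_le_iff _).2 fun a j hj ↦ ?_
  obtain hj | rfl := Nat.lt_succ_iff_lt_or_eq.1 hj
  · refine (V k).sub_mem ?_ (hlower a j hj _)
    have hmem := ridgeFiltration_mono _ hj.le (hρ.condOp_ridge_X_pow_sub_smul_mem hy hν a j)
    simpa using (V k).add_mem hmem (hlower a j hj ((-1) ^ (j / 2) * sphereMoment ν j))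
  · exact hρ.condOp_ridge_X_pow_sub_smul_mem hy hν a j

end Eigenvalues

lemma abs_inner_condOp_le (hρ : IsUniformOrthonormalPair ρ) {f : Lp ℝ 2 ρ.fst}
    (hf : f ∈ (ridgeFiltration hρ.ae_fst_norm_eq_one 1)ᗮ) :
    |⟪hρ.condOp f, f⟫_ℝ| ≤ 1 / (Module.finrank ℝ E - 1) * ‖f‖ ^ 2 := by
  obtain ⟨x, y, hx, hy, hxy⟩ := hρ.exists_orthonormal
  have hx₀ : x ≠ 0 := norm_ne_zero_iff.1 (hx ▸ one_ne_zero)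
  have hy₀ : y ≠ 0 := norm_ne_zero_iff.1 (hy ▸ one_ne_zero)
  have : Nontrivial (ℝ ∙ y)ᗮ := (Submodule.nontrivial_iff_ne_bot).2
    ((Submodule.ne_bot_iff _).2 ⟨x, Submodule.mem_orthogonal_singleton_iff_inner_left.2 hxy, hx₀⟩)
  obtain ⟨ν, _, hν⟩ := exists_isUniformOnSphere (ℝ ∙ y)ᗮ
  refine abs_inner_map_self_le_of_filtration hρ.isSymmetric_condOp
    (ridgeFiltration_mono _) (ridgeFiltration_zero _) (topologicalClosure_iSup_ridgeFiltration _)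
    (fun k f hf ↦ hρ.condOp_sub_smul_mem hy hν k hf) (fun k hk ↦ ?_) hf
  rw [abs_mul, abs_neg_one_pow, one_mul, ← finrank_orthogonal_singleton hy₀]
  exact hν.abs_sphereMoment_le hk

theorem abs_covariance_le (hρ : IsUniformOrthonormalPair ρ) {φ : E → ℝ} (hφ : MemLp φ 2 ρ.fst) :
    |cov[fun p ↦ φ p.1, fun p ↦ φ p.2; ρ]| ≤ Var[φ; ρ.fst] / (Module.finrank ℝ E - 1) := by
  set m := ∫ x, φ x ∂ρ.fst
  have hψ : MemLp (fun x ↦ φ x - m) 2 ρ.fst := hφ.sub (memLp_const m)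
  have hψ₀ : ∫ x, (φ x - m) ∂ρ.fst = 0 := by
    simp [integral_sub (hφ.integrable one_le_two), m]
  have hfst : ∫ p, φ p.1 ∂ρ = m :=
    integral_comp_of_measurePreserving ⟨measurable_fst, rfl⟩ hφ.1
  have hsnd : ∫ p, φ p.2 ∂ρ = m :=
    integral_comp_of_measurePreserving hρ.measurePreserving_snd hφ.1
  have hcov : cov[fun p ↦ φ p.1, fun p ↦ φ p.2; ρ]
      = ⟪hρ.condOp (hψ.toLp _), hψ.toLp _⟫_ℝ := by
    rw [condOp, inner_correlationOp_toLp, covariance, hfst, hsnd]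
    refine integral_congr_ae ?_
    filter_upwards [hρ.measurePreserving_snd.quasiMeasurePreserving.ae hψ.coeFn_toLp] with p hp
    rw [hp]
  have hvar : Var[φ; ρ.fst] = ‖hψ.toLp _‖ ^ 2 := by
    rw [variance_eq_integral hφ.1.aemeasurable, ← real_inner_self_eq_norm_sq, L2.inner_def]
    refine integral_congr_ae ?_
    filter_upwards [hψ.coeFn_toLp] with x hx
    rw [hx, real_inner_self_eq_norm_sq, Real.norm_eq_abs, sq_abs]
  rw [hcov, hvar, div_eq_inv_mul, ← one_div]
  exact hρ.abs_inner_condOp_le (toLp_mem_orthogonal_ridgeFiltration_one _ hψ hψ₀)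

end IsUniformOrthonormalPair

variable {Ω ι : Type*} [MeasurableSpace Ω] {μ : Measure Ω} {b : Ω → ι → E}

lemma isUniformOrthonormalPair_map [BorelSpace E] [FiniteDimensional ℝ E] (hb : Measurable b)
    (hON : ∀ᵐ ω ∂μ, Orthonormal ℝ (b ω))
    (hinv : ∀ L : E ≃ₗᵢ[ℝ] E, μ.map (fun ω i ↦ L (b ω i)) = μ.map b) {i j : ι} (hij : i ≠ j) :
    IsUniformOrthonormalPair (μ.map fun ω ↦ (b ω i, b ω j)) := by
  have hpair : Measurable fun c : ι → E ↦ (c i, c j) := by fun_prop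
  have hbpair : Measurable fun ω ↦ (b ω i, b ω j) := hpair.comp hb
  refine ⟨?_, ?_, ?_, fun L ↦ ?_⟩
  · exact (ae_map_iff hbpair.aemeasurable (measurableSet_eq_fun (by fun_prop) (by fun_prop))).2
      (hON.mono fun ω hω ↦ hω.1 i)
  · exact (ae_map_iff hbpair.aemeasurable (measurableSet_eq_fun (by fun_prop) (by fun_prop))).2
      (hON.mono fun ω hω ↦ hω.1 j)
  · exact (ae_map_iff hbpair.aemeasurable (measurableSet_eq_fun (by fun_prop) (by fun_prop))).2
      (hON.mono fun ω hω ↦ hω.2 hij)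
  · have hL : Measurable L := L.continuous.measurable
    have hLb : Measurable fun ω i ↦ L (b ω i) := by fun_prop
    calc (μ.map fun ω ↦ (b ω i, b ω j)).map (Prod.map L L)
        = μ.map fun ω ↦ (L (b ω i), L (b ω j)) := Measure.map_map (hL.prodMap hL) hbpair
      _ = (μ.map fun ω i ↦ L (b ω i)).map fun c ↦ (c i, c j) := (Measure.map_map hpair hLb).symm
      _ = μ.map fun ω ↦ (b ω i, b ω j) := by
          rw [hinv, Measure.map_map hpair hb]
          rfl

theorem covariance_bound_random_onb_general [BorelSpace E] [FiniteDimensional ℝ E]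
    [IsProbabilityMeasure μ] (hb : Measurable b) (hON : ∀ᵐ ω ∂μ, Orthonormal ℝ (b ω))
    (hinv : ∀ L : E ≃ₗᵢ[ℝ] E, μ.map (fun ω i ↦ L (b ω i)) = μ.map b) {i j : ι} (hij : i ≠ j)
    {φ : E → ℝ} (hφ : MemLp φ 2 (μ.map fun ω ↦ b ω i)) :
    |(∫ ω, φ (b ω i) * φ (b ω j) ∂μ) - (∫ ω, φ (b ω i) ∂μ) * ∫ ω, φ (b ω j) ∂μ|
      ≤ ((∫ ω, φ (b ω i) ^ 2 ∂μ) - (∫ ω, φ (b ω i) ∂μ) ^ 2) / (Module.finrank ℝ E - 1) := by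
  have hρ := isUniformOrthonormalPair_map hb hON hinv hij
  set ρ := μ.map fun ω ↦ (b ω i, b ω j)
  have hpair : MeasurePreserving (fun ω ↦ (b ω i, b ω j)) μ ρ := ⟨by fun_prop, rfl⟩
  have : IsProbabilityMeasure ρ := Measure.isProbabilityMeasure_map hpair.aemeasurable
  have hfst : MeasurePreserving Prod.fst ρ ρ.fst := ⟨measurable_fst, rfl⟩
  have hi : MeasurePreserving (fun ω ↦ b ω i) μ ρ.fst := hfst.comp hpair
  have hj : MeasurePreserving (fun ω ↦ b ω j) μ ρ.fst := hρ.measurePreserving_snd.comp hpair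
  rw [hi.map_eq] at hφ
  have hcov : cov[fun p ↦ φ p.1, fun p ↦ φ p.2; ρ]
      = (∫ ω, φ (b ω i) * φ (b ω j) ∂μ) - (∫ ω, φ (b ω i) ∂μ) * ∫ ω, φ (b ω j) ∂μ := by
    refine (covariance_map_fun (hφ.1.comp_measurePreserving hfst)
      (hφ.1.comp_measurePreserving hρ.measurePreserving_snd) hpair.aemeasurable).trans ?_
    exact covariance_eq_sub (hφ.comp_measurePreserving hi) (hφ.comp_measurePreserving hj)
  have hvar : Var[φ; ρ.fst] = (∫ ω, φ (b ω i) ^ 2 ∂μ) - (∫ ω, φ (b ω i) ∂μ) ^ 2 := by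
    rw [← hi.variance_fun_comp hφ.1.aemeasurable]
    exact variance_eq_sub (hφ.comp_measurePreserving hi)
  rw [← hcov, ← hvar]
  exact hρ.abs_covariance_le hφ

end Covariance

/-- if `(b_1, …, b_d)` is a uniformly random orthonormal basis of `ℝ^d`
(`d ≥ 4`), i.e. an a.s. orthonormal random `d`-tuple whose law is invariant under all
rotations, and `φ` is square-integrable on the sphere, then
`|Cov(φ(b_1), φ(b_2))| ≤ Var_u(φ)/(d-1)`; here, since each `b_i` is uniform on the sphere,
the variance of `φ` under the uniform measure equals `Var(φ(b_1))`. -/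
theorem covariance_bound_random_onb
    (d : ℕ) (hd : 4 ≤ d)
    {Ω : Type*} [MeasurableSpace Ω] (μ : Measure Ω) [IsProbabilityMeasure μ]
    (b : Ω → Fin d → EuclideanSpace ℝ (Fin d)) (hbmeas : Measurable b)
    (hON : ∀ᵐ ω ∂μ, Orthonormal ℝ (b ω))
    (hinv : ∀ L : EuclideanSpace ℝ (Fin d) ≃ₗᵢ[ℝ] EuclideanSpace ℝ (Fin d),
      Measure.map (fun ω i => L (b ω i)) μ = Measure.map b μ)
    (φ : EuclideanSpace ℝ (Fin d) → ℝ) (hφ : Measurable φ)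
    (hint1 : Integrable (fun ω => φ (b ω ⟨0, by omega⟩)) μ)
    (hint2 : Integrable (fun ω => φ (b ω ⟨0, by omega⟩) ^ 2) μ)
    (hint3 : Integrable (fun ω => φ (b ω ⟨0, by omega⟩) * φ (b ω ⟨1, by omega⟩)) μ) :
    |(∫ ω, φ (b ω ⟨0, by omega⟩) * φ (b ω ⟨1, by omega⟩) ∂μ)
        - (∫ ω, φ (b ω ⟨0, by omega⟩) ∂μ) * ∫ ω, φ (b ω ⟨1, by omega⟩) ∂μ|
      ≤ ((∫ ω, φ (b ω ⟨0, by omega⟩) ^ 2 ∂μ) - (∫ ω, φ (b ω ⟨0, by omega⟩) ∂μ) ^ 2)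
          / ((d : ℝ) - 1) := by
  simpa using covariance_bound_random_onb_general hbmeas hON hinv (by simp)
    ((memLp_map_measure_iff hφ.aestronglyMeasurable (by fun_prop)).2
      ((memLp_two_iff_integrable_sq hint1.1).2 hint2))
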